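/- Let f be an entire function of finite order such that |f(z)| → 0 as |z| → ∞ with z outside a set Ω of zero area density. Then f is identically zero. -/

import Mathlib

open MeasureTheory Filter

open Real

/-- The sub-mean value property of `log⁺ ‖g‖` for an entire function `g`. -/
theorem posLog_norm_le_circleAverage {g : ℂ → ℂ} (hg : Differentiable ℂ g) (c : ℂ) {r : ℝ}
    (hr : 0 < r) : log⁺ ‖g c‖ ≤ circleAverage (fun z ↦ log⁺ ‖g z‖) c r := by
  have ha : AnalyticOnNhd ℂ g (Metric.closedBall c |r|) := fun z _ ↦ hg.analyticAt z
  have hs : MeromorphicOn g (Metric.sphere c |r|) :=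
    fun z _ ↦ (hg.analyticAt z).meromorphicAt
  have h0 : 0 ≤ circleAverage (fun z ↦ log⁺ ‖g z‖) c r :=
    circleAverage_nonneg_of_nonneg fun z _ ↦ posLog_nonneg
  rcases eq_or_ne (g c) 0 with h | h
  · simpa [h] using h0
  refine max_le h0 ?_
  calc log ‖g c‖ ≤ circleAverage (log ‖g ·‖) c r := by
        rw [ha.circleAverage_log_norm hr.ne' h]
        refine le_add_of_nonneg_left (finsum_nonneg fun u ↦ ?_)
        by_cases hu : u ∈ Metric.closedBall c |r|
        · refine mul_nonneg ?_ ?_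
          · exact_mod_cast (MeromorphicOn.AnalyticOnNhd.divisor_nonneg ha) u
          · rcases eq_or_ne c u with rfl | hcu
            · simp
            · have hpos : 0 < ‖c - u‖ := norm_pos_iff.2 (sub_ne_zero.2 hcu)
              rw [Metric.mem_closedBall, dist_comm, dist_eq_norm, abs_of_pos hr] at hu
              apply log_nonneg
              rw [← div_eq_mul_inv]
              exact (one_le_div hpos).2 hu
        · rw [Function.locallyFinsuppWithin.apply_eq_zero_of_notMem _ hu]; simp
    _ ≤ _ := circleAverage_mono hs.circleIntegrable_log_norm hs.circleIntegrable_posLog_norm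
        fun z _ ↦ le_max_right _ _

/-- The sub-mean value property over circles implies the one over discs. -/
theorem ofReal_mul_le_setLIntegral_ball {u : ℂ → ℝ} (hu : Continuous u) (h0 : ∀ z, 0 ≤ u z)
    {c : ℂ} (hc : ∀ r > 0, u c ≤ circleAverage u c r) {R : ℝ} (hR : 0 < R) :
    ENNReal.ofReal (π * R ^ 2 * u c) ≤ ∫⁻ z in Metric.ball c R, ENNReal.ofReal (u z) := by
  set F : ℂ → ENNReal := (Metric.ball c R).indicator fun z ↦ ENNReal.ofReal (u z) with hF
  have hFm : Measurable F :=
    (ENNReal.measurable_ofReal.comp hu.measurable).indicator Metric.isOpen_ball.measurableSet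
  have hinner : ∀ r ∈ Set.Ioo 0 R, ENNReal.ofReal (2 * π * u c * r) ≤
      ∫⁻ θ in Set.Ioo (-π) π, ENNReal.ofReal r * F (c + Complex.polarCoord.symm (r, θ)) := by
    rintro r ⟨hr, hrR⟩
    have hmap : ∀ θ : ℝ, c + Complex.polarCoord.symm (r, θ) = circleMap c r θ := by
      intro θ
      simp [circleMap, Complex.exp_mul_I]
    have hFu : ∀ θ : ℝ, F (c + Complex.polarCoord.symm (r, θ)) =
        ENNReal.ofReal (u (circleMap c r θ)) := by
      intro θ
      rw [hmap, hF, Set.indicator_of_mem]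
      simp [dist_eq_norm, circleMap, abs_of_pos hr, hrR]
    have hcont : Continuous fun θ ↦ u (circleMap c r θ) := hu.comp (continuous_circleMap c r)
    have hint : 2 * π * u c ≤ ∫ θ in Set.Ioo (-π) π, u (circleMap c r θ) := by
      have h1 := hc r hr
      have hper := ((periodic_circleMap c r).comp u).intervalIntegral_add_eq 0 (-π)
      rw [circleAverage, smul_eq_mul, ← zero_add (2 * π)] at h1
      simp only [Function.comp_def] at hper
      rw [zero_add, show -π + 2 * π = π by ring,
        intervalIntegral.integral_of_le (by linarith [pi_pos]),
        intervalIntegral.integral_of_le (by linarith [pi_pos])] at hper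
      rw [zero_add, intervalIntegral.integral_of_le (by linarith [pi_pos]), hper] at h1
      rw [← integral_Ioc_eq_integral_Ioo]
      have := mul_le_mul_of_nonneg_left h1 two_pi_pos.le
      rwa [← mul_assoc, mul_inv_cancel₀ two_pi_pos.ne', one_mul] at this
    simp_rw [hFu]
    rw [lintegral_const_mul _ (by fun_prop),
      ← ofReal_integral_eq_lintegral_ofReal
        ((hcont.integrableOn_Icc (a := -π) (b := π)).mono_set Set.Ioo_subset_Icc_self)
        (ae_of_all _ fun θ ↦ h0 _), mul_comm (2 * π * u c), ENNReal.ofReal_mul hr.le]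
    gcongr
  calc ENNReal.ofReal (π * R ^ 2 * u c)
      = ∫⁻ r in Set.Ioo 0 R, ENNReal.ofReal (2 * π * u c * r) := by
        rw [← ofReal_integral_eq_lintegral_ofReal, ← integral_Ioc_eq_integral_Ioo,
          ← intervalIntegral.integral_of_le hR.le]
        · rw [intervalIntegral.integral_const_mul, integral_id]
          ring_nf
        · exact (Continuous.integrableOn_Icc (by fun_prop)).mono_set Set.Ioo_subset_Icc_self
        · filter_upwards [ae_restrict_mem measurableSet_Ioo] with r hr
          have := h0 c
          have := hr.1
          simp only [Pi.zero_apply]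
          positivity
    _ ≤ ∫⁻ r in Set.Ioo 0 R, ∫⁻ θ in Set.Ioo (-π) π,
          ENNReal.ofReal r * F (c + Complex.polarCoord.symm (r, θ)) :=
        setLIntegral_mono' measurableSet_Ioo hinner
    _ ≤ ∫⁻ r in Set.Ioi 0, ∫⁻ θ in Set.Ioo (-π) π,
          ENNReal.ofReal r * F (c + Complex.polarCoord.symm (r, θ)) :=
        lintegral_mono_set Set.Ioo_subset_Ioi_self
    _ = ∫⁻ p in polarCoord.target,
          ENNReal.ofReal p.1 • F (c + Complex.polarCoord.symm p) := by
        rw [polarCoord_target, Measure.volume_eq_prod, ← Measure.prod_restrict, lintegral_prod]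
        · rfl
        · have : Measurable fun p : ℝ × ℝ ↦ Complex.polarCoord.symm p := by
            simp only [Complex.polarCoord_symm_apply]
            fun_prop
          fun_prop
    _ = ∫⁻ w, F (c + w) := Complex.lintegral_comp_polarCoord_symm fun w ↦ F (c + w)
    _ = ∫⁻ z, F z := lintegral_add_left_eq_self F c
    _ = _ := lintegral_indicator Metric.isOpen_ball.measurableSet _

/-- A nonnegative subharmonic function which is bounded by `K` on a disc and whose support fills only
a proportion `δ` of it is bounded by `δ * K` on the concentric disc of half the radius. -/
theorem le_mul_of_volume_support_le {u : ℂ → ℝ} (hu : Continuous u) (h0 : ∀ z, 0 ≤ u z)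
    (hsub : ∀ c, ∀ r > 0, u c ≤ circleAverage u c r) {R δ K : ℝ} (hR : 0 < R)
    (hvol : volume ({z | 0 < u z} ∩ Metric.ball 0 (2 * R)) ≤ ENNReal.ofReal (δ * (π * R ^ 2)))
    (hδ : 0 ≤ δ) (hK : ∀ z ∈ Metric.ball (0 : ℂ) (2 * R), u z ≤ K) {c : ℂ}
    (hc : c ∈ Metric.ball (0 : ℂ) R) : u c ≤ δ * K := by
  have hK0 : 0 ≤ K := (h0 0).trans (hK 0 (by simpa using hR))
  have hball : Metric.ball c R ⊆ Metric.ball 0 (2 * R) :=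
    Metric.ball_subset_ball' (by linarith [Metric.mem_ball.1 hc])
  have hE : MeasurableSet {z | 0 < u z} := (isOpen_lt continuous_const hu).measurableSet
  have hle : ENNReal.ofReal (π * R ^ 2 * u c) ≤ ENNReal.ofReal (π * R ^ 2 * (δ * K)) :=
    calc ENNReal.ofReal (π * R ^ 2 * u c)
        ≤ ∫⁻ z in Metric.ball c R, ENNReal.ofReal (u z) :=
          ofReal_mul_le_setLIntegral_ball hu h0 (hsub c) hR
      _ ≤ ∫⁻ z in Metric.ball c R, {z | 0 < u z}.indicator (fun _ ↦ ENNReal.ofReal K) z := by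
          refine setLIntegral_mono' Metric.isOpen_ball.measurableSet fun z hz ↦ ?_
          rcases (h0 z).eq_or_lt with h | h
          · simp [← h]
          · rw [Set.indicator_of_mem (show z ∈ {z | 0 < u z} from h)]
            exact ENNReal.ofReal_le_ofReal (hK z (hball hz))
      _ = ENNReal.ofReal K * volume ({z | 0 < u z} ∩ Metric.ball c R) := by
          rw [lintegral_indicator_const hE, Measure.restrict_apply hE]
      _ ≤ ENNReal.ofReal K * ENNReal.ofReal (δ * (π * R ^ 2)) := by
          gcongr
          exact (measure_mono (Set.inter_subset_inter_right _ hball)).trans hvol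
      _ = ENNReal.ofReal (π * R ^ 2 * (δ * K)) := by
          rw [← ENNReal.ofReal_mul hK0]
          ring_nf
  rw [ENNReal.ofReal_le_ofReal_iff (by positivity)] at hle
  exact le_of_mul_le_mul_left hle (by positivity)

/-- A nonnegative subharmonic function of polynomial growth with sufficiently sparse support vanishes. -/
theorem eq_zero_of_volume_support_le {u : ℂ → ℝ} (hu : Continuous u) (h0 : ∀ z, 0 ≤ u z)
    (hsub : ∀ c, ∀ r > 0, u c ≤ circleAverage u c r) {A ρ R₀ : ℝ} (hA : 0 ≤ A) (hρ : 0 ≤ ρ)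
    (hgrowth : ∀ z, u z ≤ A + ‖z‖ ^ ρ) (hR₀ : 0 < R₀)
    (hvol : ∀ R ≥ R₀, volume ({z | 0 < u z} ∩ Metric.ball 0 (2 * R)) ≤
      ENNReal.ofReal ((2 ^ ρ)⁻¹ / 2 * (π * R ^ 2))) (z : ℂ) : u z = 0 := by
  have key : ∀ n : ℕ, ∀ R ≥ R₀, ∀ z ∈ Metric.ball (0 : ℂ) R,
      u z ≤ (1 / 2) ^ n * (A + R ^ ρ) := by
    intro n
    induction n with
    | zero =>
      intro R _ z hz
      rw [mem_ball_zero_iff] at hz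
      have := Real.rpow_le_rpow (norm_nonneg z) hz.le hρ
      linarith [hgrowth z]
    | succ n ih =>
      intro R hR z hz
      have hRpos : 0 < R := hR₀.trans_le hR
      refine (le_mul_of_volume_support_le hu h0 hsub hRpos (hvol R hR) (by positivity)
        (ih (2 * R) (by linarith)) hz).trans ?_
      have h2 : (1 : ℝ) ≤ 2 ^ ρ := Real.one_le_rpow one_le_two hρ
      rw [Real.mul_rpow zero_le_two hRpos.le]
      calc (2 ^ ρ : ℝ)⁻¹ / 2 * ((1 / 2) ^ n * (A + 2 ^ ρ * R ^ ρ))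
          = (1 / 2) ^ (n + 1) * ((2 ^ ρ : ℝ)⁻¹ * A + R ^ ρ) := by
            rw [pow_succ]
            field_simp
        _ ≤ (1 / 2) ^ (n + 1) * (A + R ^ ρ) := by
            gcongr
            exact mul_le_of_le_one_left hA (inv_le_one_of_one_le₀ h2)
  refine le_antisymm ?_ (h0 z)
  have hlim : Tendsto (fun n : ℕ ↦ (1 / 2 : ℝ) ^ n * (A + (R₀ + ‖z‖ + 1) ^ ρ)) atTop (nhds 0) := by
    simpa using (tendsto_pow_atTop_nhds_zero_of_lt_one (r := (1 / 2 : ℝ)) (by norm_num)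
      (by norm_num)).mul_const (A + (R₀ + ‖z‖ + 1) ^ ρ)
  refine ge_of_tendsto' hlim fun n ↦ key n _ (by linarith [norm_nonneg z]) z ?_
  rw [mem_ball_zero_iff]
  linarith

/-- A set contained in the union of a set of zero area density and a disc is eventually sparse. -/
theorem exists_volume_le_of_zero_density {Ω E : Set ℂ} {r δ : ℝ} (hδ : 0 < δ)
    (hΩ : Tendsto (fun R : ℝ => (volume (Ω ∩ Metric.ball (0 : ℂ) R)).toReal / R ^ 2)
      atTop (nhds 0)) (hE : E ⊆ Ω ∪ Metric.ball 0 r) :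
    ∃ R₀ > 0, ∀ R ≥ R₀, volume (E ∩ Metric.ball 0 (2 * R)) ≤ ENNReal.ofReal (δ * R ^ 2) := by
  have hfin : ∀ s : ℝ, volume (Ω ∩ Metric.ball (0 : ℂ) s) ≠ ⊤ := fun s ↦
    measure_ne_top_of_subset Set.inter_subset_right measure_ball_lt_top.ne
  have h1 : ∀ᶠ R : ℝ in atTop,
      (volume (Ω ∩ Metric.ball (0 : ℂ) (2 * R))).toReal / (2 * R) ^ 2 < δ / 8 :=
    (tendsto_id.const_mul_atTop (zero_lt_two' ℝ)).eventually
      (hΩ.eventually_lt_const (by positivity))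
  have h2 : ∀ᶠ R : ℝ in atTop, 2 * (volume (Metric.ball (0 : ℂ) r)).toReal / δ ≤ R ^ 2 :=
    (tendsto_pow_atTop two_ne_zero).eventually_ge_atTop _
  obtain ⟨R₀, hR₀⟩ := eventually_atTop.1 (h1.and h2)
  refine ⟨max R₀ 1, by positivity, fun R hR ↦ ?_⟩
  have hRpos : 0 < R := one_pos.trans_le ((le_max_right _ _).trans hR)
  obtain ⟨h3, h4⟩ := hR₀ R ((le_max_left _ _).trans hR)
  rw [div_lt_iff₀ (by positivity)] at h3
  rw [div_le_iff₀ hδ] at h4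
  calc volume (E ∩ Metric.ball 0 (2 * R))
      ≤ volume ((Ω ∩ Metric.ball 0 (2 * R)) ∪ Metric.ball 0 r) := by
        refine measure_mono fun z hz ↦ ?_
        exact (hE hz.1).imp (fun h ↦ ⟨h, hz.2⟩) id
    _ ≤ volume (Ω ∩ Metric.ball 0 (2 * R)) + volume (Metric.ball (0 : ℂ) r) := measure_union_le _ _
    _ = ENNReal.ofReal ((volume (Ω ∩ Metric.ball (0 : ℂ) (2 * R))).toReal +
          (volume (Metric.ball (0 : ℂ) r)).toReal) := by
        rw [ENNReal.ofReal_add ENNReal.toReal_nonneg ENNReal.toReal_nonneg,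
          ENNReal.ofReal_toReal (hfin _), ENNReal.ofReal_toReal measure_ball_lt_top.ne]
    _ ≤ ENNReal.ofReal (δ * R ^ 2) := ENNReal.ofReal_le_ofReal (by linarith)

/-- Let `f` be an entire function of finite order such that `|f(z)| → 0`
as `|z| → ∞` with `z` outside a set `Ω` of zero area density. Then `f ≡ 0`. -/
theorem stmt2 (f : ℂ → ℂ) (hf : Differentiable ℂ f)
    (C ρ : ℝ) (hC : 0 < C) (hρ : 0 < ρ)
    (hgrowth : ∀ z : ℂ, ‖f z‖ ≤ C * Real.exp (‖z‖ ^ ρ))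
    (Ω : Set ℂ)
    (hΩ : Tendsto (fun R : ℝ => (volume (Ω ∩ Metric.ball (0 : ℂ) R)).toReal / R ^ 2)
      atTop (nhds 0))
    (hdecay : ∀ ε > (0 : ℝ), ∃ R : ℝ, ∀ z ∉ Ω, R ≤ ‖z‖ → ‖f z‖ ≤ ε) :
    ∀ z, f z = 0 := by
  intro z
  refine norm_le_zero_iff.1 (le_of_forall_pos_le_add fun ε hε ↦ ?_)
  obtain ⟨r, hr⟩ := hdecay ε hε
  set u : ℂ → ℝ := fun z ↦ log⁺ ‖f z / ε‖ with hu
  have hnorm : ∀ z, ‖f z / ε‖ = ‖f z‖ / ε := fun z ↦ by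
    rw [norm_div, Complex.norm_real, Real.norm_of_nonneg hε.le]
  have hg : Differentiable ℂ fun z ↦ f z / ε := hf.div_const _
  have hzero : ∀ z, u z = 0 ↔ ‖f z‖ ≤ ε := fun z ↦ by
    rw [hu, posLog_eq_zero_iff, abs_norm, hnorm, div_le_one hε]
  have hE : {z | 0 < u z} ⊆ Ω ∪ Metric.ball 0 r := by
    intro w hw
    by_contra h
    rw [Set.mem_union, not_or, mem_ball_zero_iff, not_lt] at h
    exact hw.ne' ((hzero w).2 (hr w h.1 h.2))
  have hbound : ∀ w, u w ≤ log⁺ (C / ε) + ‖w‖ ^ ρ := fun w ↦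
    calc u w ≤ log⁺ (C / ε * Real.exp (‖w‖ ^ ρ)) := by
          refine monotoneOn_posLog (norm_nonneg _) ?_ ?_
          · exact Set.mem_Ici.2 (by positivity)
          · rw [hnorm, div_mul_eq_mul_div]
            gcongr
            exact hgrowth w
      _ ≤ log⁺ (C / ε) + log⁺ (Real.exp (‖w‖ ^ ρ)) := posLog_mul
      _ = log⁺ (C / ε) + ‖w‖ ^ ρ := by
          rw [posLog_apply, posLog_apply, Real.log_exp, max_eq_right (a := 0) (b := ‖w‖ ^ ρ)]
          positivity
  obtain ⟨R₀, hR₀, hvol⟩ := exists_volume_le_of_zero_density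
    (δ := (2 ^ ρ)⁻¹ / 2 * π) (by positivity) hΩ hE
  have hfz := eq_zero_of_volume_support_le (continuous_posLog.comp hg.continuous.norm)
    (fun _ ↦ posLog_nonneg) (fun c r hr ↦ posLog_norm_le_circleAverage hg c hr)
    posLog_nonneg hρ.le hbound hR₀ (fun R hR ↦ by simpa only [mul_assoc] using! hvol R hR) z
  rw [zero_add]
  exact (hzero z).1 hfz
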